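/- Let b be a geodesic ray in a proper CAT(0) space. If the κ-lower divergence of b is superlinear, i.e. div_κ(r)/r → ∞ as r → ∞, then b is κ-slim (satisfies κ-slim condition 4, and hence all four κ-slim conditions). -/

import Mathlib

open Set Metric Filter ENNReal

noncomputable section

/-- The set of points lying on a geodesic from `x` to `y`; in a uniquely geodesic space
(such as a CAT(0) space) this is the geodesic segment `[x,y]`. -/
def seg {X : Type*} [MetricSpace X] (x y : X) : Set X :=
  {z | dist x z + dist z y = dist x y}

/-- `X` is a geodesic metric space. -/
def GeodesicSpace (X : Type*) [MetricSpace X] : Prop :=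
  ∀ x y : X, ∃ γ : ℝ → X, γ 0 = x ∧ γ (dist x y) = y ∧
    ∀ s ∈ Icc (0:ℝ) (dist x y), ∀ t ∈ Icc (0:ℝ) (dist x y), dist (γ s) (γ t) = |s - t|

/-- `X` is a CAT(0) space: a geodesic metric space satisfying the CN (Bruhat–Tits)
inequality (comparison of triangles with Euclidean ones). -/
def IsCAT0 (X : Type*) [MetricSpace X] : Prop :=
  GeodesicSpace X ∧ ∀ x y z m : X, dist y m = dist y z / 2 → dist m z = dist y z / 2 →
    dist x m ^ 2 ≤ (dist x y ^ 2 + dist x z ^ 2) / 2 - dist y z ^ 2 / 4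

/-- `b` restricted to `[0,∞)` is a geodesic ray (an isometric embedding of `[0,∞)`). -/
def IsGeodesicRay {X : Type*} [MetricSpace X] (b : ℝ → X) : Prop :=
  ∀ s t : ℝ, 0 ≤ s → 0 ≤ t → dist (b s) (b t) = |s - t|

/-- The image of the geodesic ray `b`. -/
def rayIm {X : Type*} [MetricSpace X] (b : ℝ → X) : Set X := b '' Ici 0

/-- `κ` is a sublinear function: monotone increasing, concave, `≥ 1`, with `κ(t)/t → 0`. -/
structure IsSublinearFn (κ : ℝ → ℝ) : Prop where
  one_le : ∀ t : ℝ, 1 ≤ κ t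
  mono : Monotone κ
  concave : ConcaveOn ℝ (Ici 0) κ
  sublinear : Tendsto (fun t => κ t / t) atTop (nhds 0)

/-- `π` is the nearest-point projection onto the geodesic ray `b`:
`π x` lies on `b` and realizes the distance from `x` to `b`. -/
def IsProj {X : Type*} [MetricSpace X] (b : ℝ → X) (π : X → X) : Prop :=
  ∀ x : X, π x ∈ rayIm b ∧ dist x (π x) = infDist x (rayIm b)

/-- The geodesic ray `b` (with projection `π`) is `κ`-contracting: there is `c ≥ 0` such
that whenever `d(x,y) ≤ d(x,b)` we have `d(x_b, y_b) ≤ c·κ(‖x‖)`. -/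
def KappaContracting {X : Type*} [MetricSpace X] (κ : ℝ → ℝ) (o : X) (b : ℝ → X)
    (π : X → X) : Prop :=
  ∃ c ≥ (0:ℝ), ∀ x y : X, dist x y ≤ infDist x (rayIm b) →
    dist (π x) (π y) ≤ c * κ (dist o x)

/-- `b` is `κ`-contracting with contracting constant `c` (projection form, Lemma 2.6):
whenever `d(x,y) < d(x,b)` we have `d(x_b, y_b) ≤ c·κ(‖x_b‖)`. -/
def KappaContractingWith {X : Type*} [MetricSpace X] (κ : ℝ → ℝ) (o : X) (b : ℝ → X)
    (π : X → X) (c : ℝ) : Prop :=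
  0 ≤ c ∧ ∀ x y : X, dist x y < infDist x (rayIm b) →
    dist (π x) (π y) ≤ c * κ (dist o (π x))

/-- κ-slim condition 1: `d(x_b, [x,y]) ≤ c·κ(‖x_b‖)` for all `x ∈ X`, `y ∈ im(b)`. -/
def SlimCond1 {X : Type*} [MetricSpace X] (κ : ℝ → ℝ) (o : X) (b : ℝ → X) (π : X → X) : Prop :=
  ∃ c ≥ (0:ℝ), ∀ x : X, ∀ y ∈ rayIm b, infDist (π x) (seg x y) ≤ c * κ (dist o (π x))

/-- κ-slim condition 2: `d(x_b, [x,y]) ≤ c·κ(‖z‖)` for some `z` on `b` between `x_b` and `y`. -/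
def SlimCond2 {X : Type*} [MetricSpace X] (κ : ℝ → ℝ) (o : X) (b : ℝ → X) (π : X → X) : Prop :=
  ∃ c ≥ (0:ℝ), ∀ x : X, ∀ y ∈ rayIm b, ∃ z ∈ rayIm b ∩ seg (π x) y,
    infDist (π x) (seg x y) ≤ c * κ (dist o z)

/-- κ-slim condition 3: for `x y z` with `[y,z] ⊆ im(b)` and `w ∈ [y,z]`,
`d(w, [y,x] ∪ [x,z]) ≤ c·κ(‖x_b‖)`. -/
def SlimCond3 {X : Type*} [MetricSpace X] (κ : ℝ → ℝ) (o : X) (b : ℝ → X) (π : X → X) : Prop :=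
  ∃ c ≥ (0:ℝ), ∀ x y z : X, seg y z ⊆ rayIm b →
    ∀ w ∈ seg y z, infDist w (seg y x ∪ seg x z) ≤ c * κ (dist o (π x))

/-- κ-slim condition 4: for `x ∈ X` and `[y,z] ⊆ im(b)` with `‖y‖ ≤ ‖x_b‖ ≤ ‖z‖` and
`w ∈ [y,z]`, `d(w, [y,x] ∪ [x,z]) ≤ c·κ(‖z‖)`. -/
def SlimCond4 {X : Type*} [MetricSpace X] (κ : ℝ → ℝ) (o : X) (b : ℝ → X) (π : X → X) : Prop :=
  ∃ c ≥ (0:ℝ), ∀ x y z : X, seg y z ⊆ rayIm b →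
    dist o y ≤ dist o (π x) → dist o (π x) ≤ dist o z →
    ∀ w ∈ seg y z, infDist w (seg y x ∪ seg x z) ≤ c * κ (dist o z)

/-- The set of (continuous, rectifiable-or-not) paths from `b(t - r·κ(t))` to
`b(t + r·κ(t))` avoiding the open ball of radius `r·κ(t)` about `b(t)`. -/
def pathsOutside {X : Type*} [MetricSpace X] (κ : ℝ → ℝ) (b : ℝ → X) (r t : ℝ) :
    Set (ℝ → X) :=
  {γ | ContinuousOn γ (Icc 0 1) ∧ γ 0 = b (t - r * κ t) ∧ γ 1 = b (t + r * κ t) ∧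
       ∀ s ∈ Icc (0:ℝ) 1, γ s ∉ ball (b t) (r * κ t)}

/-- `ρ_κ(r,t)`: the infimum of the lengths of paths from `b(t - r·κ(t))` to
`b(t + r·κ(t))` lying outside the open ball of radius `r·κ(t)` about `b(t)`
(`∞` if there is no such path). -/
noncomputable def rhoKappa {X : Type*} [MetricSpace X] (κ : ℝ → ℝ) (b : ℝ → X)
    (r t : ℝ) : ℝ≥0∞ :=
  ⨅ γ ∈ pathsOutside κ b r t, eVariationOn γ (Icc 0 1)

/-- The κ-lower divergence `div_κ(r) = inf_{t > r·κ(t)} ρ_κ(r,t)/κ(t)`. -/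
noncomputable def divKappa {X : Type*} [MetricSpace X] (κ : ℝ → ℝ) (b : ℝ → X)
    (r : ℝ) : ℝ≥0∞ :=
  ⨅ t ∈ {t : ℝ | r * κ t < t}, rhoKappa κ b r t / ENNReal.ofReal (κ t)

/-!
Let `p = x_b` and let `D` be the distance from `p` to `[x, y]`, where `y ∈ b`. The ball of radius
`D / 4` about the point `m ∈ [p, y]` with `d(p, m) = D / 2` can be bypassed by a path of length
`O(D)`: walk from `p` along `[p, x]`, which stays away from `m` because `p` is the point of `b`
nearest to `x`; cross over to the point of `[x, y]` nearest to `p` and on to `[p, y]`, staying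
outside the ball of radius `D` about `p`; come back along `[p, y]`. By CAT(0) comparison both
crossings can be made at distance `O(D)` from `p`, however far away `x` and `y` are. If `D` were
not `O(κ(‖p‖))`, these detours would contradict superlinearity of the divergence.
-/

section Segments

variable {X : Type*} [MetricSpace X] {x y z m : X}

lemma mem_seg : z ∈ seg x y ↔ dist x z + dist z y = dist x y := Iff.rfl

lemma left_mem_seg (x y : X) : x ∈ seg x y := by simp [mem_seg]

lemma right_mem_seg (x y : X) : y ∈ seg x y := by simp [mem_seg]

lemma seg_nonempty (x y : X) : (seg x y).Nonempty := ⟨x, left_mem_seg x y⟩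

lemma seg_comm (x y : X) : seg x y = seg y x := by
  ext z
  rw [mem_seg, mem_seg, dist_comm x z, dist_comm z y, dist_comm x y, add_comm]

lemma isClosed_seg (x y : X) : IsClosed (seg x y) :=
  isClosed_eq (by fun_prop) (by fun_prop)

lemma seg_subset_seg_left (hm : m ∈ seg x y) : seg x m ⊆ seg x y := by
  intro z hz
  rw [mem_seg] at hm hz ⊢
  linarith [dist_triangle x z y, dist_triangle z m y]

lemma seg_subset_seg_right (hm : m ∈ seg x y) : seg m y ⊆ seg x y := by
  rw [seg_comm m, seg_comm x]
  exact seg_subset_seg_left (seg_comm x y ▸ hm)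

lemma half_dist_le_of_mem_seg {p : X} (hm : dist x p ≤ dist x m) (hz : z ∈ seg p x) :
    dist p m / 2 ≤ dist z m := by
  rw [mem_seg, dist_comm z x, dist_comm p x] at hz
  linarith [dist_triangle x z m, dist_triangle p z m]

/-- `γ` restricted to `[0, L]` is a unit-speed geodesic of length `L`. -/
structure IsGeodesic (γ : ℝ → X) (L : ℝ) : Prop where
  length_nonneg : 0 ≤ L
  dist_eq : ∀ s ∈ Icc 0 L, ∀ t ∈ Icc 0 L, dist (γ s) (γ t) = |s - t|

namespace IsGeodesic

variable {γ : ℝ → X} {L s : ℝ}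

lemma lipschitzOnWith (hγ : IsGeodesic γ L) : LipschitzOnWith 1 γ (Icc 0 L) :=
  .of_dist_le_mul fun s hs t ht ↦ by simp [hγ.dist_eq s hs t ht, Real.dist_eq]

lemma dist_left (hγ : IsGeodesic γ L) (hs : s ∈ Icc 0 L) : dist (γ 0) (γ s) = s := by
  rw [hγ.dist_eq 0 (left_mem_Icc.2 hγ.length_nonneg) s hs, zero_sub, abs_neg, abs_of_nonneg hs.1]

lemma dist_right (hγ : IsGeodesic γ L) (hs : s ∈ Icc 0 L) : dist (γ s) (γ L) = L - s := by
  rw [hγ.dist_eq s hs L (right_mem_Icc.2 hγ.length_nonneg), abs_sub_comm,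
    abs_of_nonneg (sub_nonneg.2 hs.2)]

lemma mem_seg (hγ : IsGeodesic γ L) (hs : s ∈ Icc 0 L) : γ s ∈ seg (γ 0) (γ L) := by
  rw [_root_.mem_seg, hγ.dist_left hs, hγ.dist_right hs,
    hγ.dist_left (right_mem_Icc.2 hγ.length_nonneg)]
  ring

end IsGeodesic

namespace GeodesicSpace

lemma exists_isGeodesic (hX : GeodesicSpace X) (x y : X) :
    ∃ γ : ℝ → X, γ 0 = x ∧ γ (dist x y) = y ∧ IsGeodesic γ (dist x y) :=
  let ⟨γ, h0, h1, hγ⟩ := hX x y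
  ⟨γ, h0, h1, dist_nonneg, hγ⟩

lemma exists_mem_seg_dist_eq (hX : GeodesicSpace X) {s : ℝ} (hs : s ∈ Icc 0 (dist x y)) :
    ∃ m ∈ seg x y, dist x m = s := by
  obtain ⟨γ, h0, h1, hγ⟩ := hX.exists_isGeodesic x y
  have hmem := hγ.mem_seg hs
  have hdist := hγ.dist_left hs
  rw [h0] at hdist
  rw [h0, h1] at hmem
  exact ⟨γ s, hmem, hdist⟩

end GeodesicSpace

end Segments

section Comparison

lemma le_max_of_midpoint_le {f : ℝ → ℝ} {a b x : ℝ} (hf : ContinuousOn f (Icc a b))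
    (hmid : ∀ s ∈ Icc a b, ∀ t ∈ Icc a b, f ((s + t) / 2) ≤ (f s + f t) / 2)
    (hx : x ∈ Icc a b) : f x ≤ max (f a) (f b) := by
  obtain ⟨c, hc, hmax⟩ := isCompact_Icc.exists_isMaxOn ⟨x, hx⟩ hf
  have hab : a ≤ b := hx.1.trans hx.2
  refine (hmax hx).trans ?_
  -- Reflect in the maximiser `c` whichever endpoint is closer to it.
  rcases le_total (2 * c) (a + b) with hca | hcb
  · have hc' : 2 * c - a ∈ Icc a b := ⟨by linarith [hc.1], by linarith⟩
    have hle := hmid a (left_mem_Icc.2 hab) _ hc'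
    rw [add_sub_cancel, mul_div_cancel_left₀ c two_ne_zero] at hle
    have hreflect : f (2 * c - a) ≤ f c := hmax hc'
    exact le_max_of_le_left (by linarith)
  · have hc' : 2 * c - b ∈ Icc a b := ⟨by linarith, by linarith [hc.2]⟩
    have hle := hmid b (right_mem_Icc.2 hab) _ hc'
    rw [add_sub_cancel, mul_div_cancel_left₀ c two_ne_zero] at hle
    have hreflect : f (2 * c - b) ≤ f c := hmax hc'
    exact le_max_of_le_right (by linarith)

namespace IsCAT0

variable {X : Type*} [MetricSpace X]

lemma dist_sq_geodesic_midpoint_le (hX : IsCAT0 X) (x : X) {γ : ℝ → X} {L s t : ℝ}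
    (hγ : IsGeodesic γ L) (hs : s ∈ Icc 0 L) (ht : t ∈ Icc 0 L) :
    dist x (γ ((s + t) / 2)) ^ 2 ≤
      (dist x (γ s) ^ 2 + dist x (γ t) ^ 2) / 2 - (s - t) ^ 2 / 4 := by
  have hm : (s + t) / 2 ∈ Icc 0 L := ⟨by linarith [hs.1, ht.1], by linarith [hs.2, ht.2]⟩
  have half_abs : |(s - t) / 2| = |s - t| / 2 := by rw [abs_div, abs_two]
  have hsm : dist (γ s) (γ ((s + t) / 2)) = dist (γ s) (γ t) / 2 := by
    rw [hγ.dist_eq s hs _ hm, hγ.dist_eq s hs t ht, ← half_abs]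
    ring_nf
  have hmt : dist (γ ((s + t) / 2)) (γ t) = dist (γ s) (γ t) / 2 := by
    rw [hγ.dist_eq _ hm t ht, hγ.dist_eq s hs t ht, ← half_abs]
    ring_nf
  simpa only [hγ.dist_eq s hs t ht, sq_abs] using hX.2 x _ _ _ hsm hmt

lemma dist_sq_geodesic_le (hX : IsCAT0 X) (x : X) {γ : ℝ → X} {L l : ℝ}
    (hγ : IsGeodesic γ L) (hl : l ∈ Icc (0 : ℝ) 1) :
    dist x (γ (l * L)) ^ 2 ≤
      (1 - l) * dist x (γ 0) ^ 2 + l * dist x (γ L) ^ 2 - l * (1 - l) * L ^ 2 := by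
  let f : ℝ → ℝ := fun l ↦ dist x (γ (l * L)) ^ 2 -
    ((1 - l) * dist x (γ 0) ^ 2 + l * dist x (γ L) ^ 2 - l * (1 - l) * L ^ 2)
  have hmaps : MapsTo (· * L) (Icc (0 : ℝ) 1) (Icc 0 L) := fun l hl ↦
    ⟨mul_nonneg hl.1 hγ.length_nonneg, mul_le_of_le_one_left hγ.length_nonneg hl.2⟩
  have hf : ContinuousOn f (Icc 0 1) := by
    have hdist : ContinuousOn (fun l ↦ dist x (γ (l * L))) (Icc 0 1) :=
      (continuous_const.dist continuous_id).comp_continuousOn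
        (hγ.lipschitzOnWith.continuousOn.comp (by fun_prop) hmaps)
    exact (hdist.pow 2).sub (by fun_prop)
  have hmid : ∀ s ∈ Icc (0 : ℝ) 1, ∀ t ∈ Icc (0 : ℝ) 1, f ((s + t) / 2) ≤ (f s + f t) / 2 := by
    intro s hs t ht
    have hle := hX.dist_sq_geodesic_midpoint_le x hγ (hmaps hs) (hmaps ht)
    rw [← add_mul, mul_div_right_comm] at hle
    simp only [f]
    linarith
  have hle : f l ≤ max (f 0) (f 1) := le_max_of_midpoint_le hf hmid hl
  simp only [f, zero_mul, one_mul] at hle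
  norm_num at hle
  linarith

lemma eq_geodesic_of_mem_seg (hX : IsCAT0 X) {γ : ℝ → X} {L : ℝ} (hγ : IsGeodesic γ L) {m : X}
    (hm : m ∈ seg (γ 0) (γ L)) : m = γ (dist (γ 0) m) := by
  rw [mem_seg, hγ.dist_left (right_mem_Icc.2 hγ.length_nonneg)] at hm
  rcases hγ.length_nonneg.eq_or_lt with rfl | hL
  · have hzero : dist (γ 0) m = 0 := by
      linarith [dist_nonneg (x := γ 0) (y := m), dist_nonneg (x := m) (y := γ 0)]
    rw [hzero, dist_eq_zero.1 hzero]
  · set l := dist (γ 0) m / L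
    have hlL : dist (γ 0) m = l * L := (div_mul_cancel₀ _ hL.ne').symm
    have hl : l ∈ Icc (0 : ℝ) 1 :=
      ⟨by positivity, (div_le_one hL).2 (by linarith [dist_nonneg (x := m) (y := γ L)])⟩
    have hsq := hX.dist_sq_geodesic_le m hγ hl
    rw [dist_comm m (γ 0), show dist m (γ L) = L - l * L by linarith, hlL] at hsq
    rw [hlL, ← dist_eq_zero]
    exact pow_eq_zero_iff two_ne_zero |>.1 (le_antisymm (by linarith) (sq_nonneg _))

lemma eq_of_mem_seg_of_dist_eq (hX : IsCAT0 X) {x y m n : X} (hm : m ∈ seg x y)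
    (hn : n ∈ seg x y) (h : dist x m = dist x n) : m = n := by
  obtain ⟨γ, rfl, h1, hγ⟩ := hX.1.exists_isGeodesic x y
  rw [← h1] at hm hn
  rw [hX.eq_geodesic_of_mem_seg hγ hm, hX.eq_geodesic_of_mem_seg hγ hn, h]

lemma mem_seg_of_dist_le (hX : IsCAT0 X) {x y m n : X} (hm : m ∈ seg x y) (hn : n ∈ seg x y)
    (h : dist x m ≤ dist x n) : m ∈ seg x n := by
  obtain ⟨m', hm', hdist⟩ := hX.1.exists_mem_seg_dist_eq ⟨dist_nonneg, h⟩
  rwa [hX.eq_of_mem_seg_of_dist_eq hm (seg_subset_seg_left hn hm') hdist.symm]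

lemma isCompact_seg (hX : IsCAT0 X) (x y : X) : IsCompact (seg x y) := by
  obtain ⟨γ, h0, h1, hγ⟩ := hX.1.exists_isGeodesic x y
  refine (isCompact_Icc.image_of_continuousOn hγ.lipschitzOnWith.continuousOn).of_isClosed_subset
    (isClosed_seg x y) fun m hm ↦ ⟨dist x m, ⟨dist_nonneg, ?_⟩, ?_⟩
  · linarith [mem_seg.1 hm, dist_nonneg (x := m) (y := y)]
  · rw [← h0, ← h1] at hm
    rw [← h0, ← hX.eq_geodesic_of_mem_seg hγ hm]

lemma dist_sq_le (hX : IsCAT0 X) (x : X) {y z m : X} {l : ℝ} (hm : m ∈ seg y z)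
    (hl : dist y m = l * dist y z) :
    dist x m ^ 2 ≤ (1 - l) * dist x y ^ 2 + l * dist x z ^ 2 - l * (1 - l) * dist y z ^ 2 := by
  rcases (dist_nonneg (x := y) (y := z)).eq_or_lt with hyz | hyz
  · obtain rfl : y = z := dist_eq_zero.1 hyz.symm
    obtain rfl : y = m := by simpa using hl
    simp only [dist_self]
    linarith
  · obtain ⟨γ, h0, h1, hγ⟩ := hX.1.exists_isGeodesic y z
    have hl01 : l ∈ Icc (0 : ℝ) 1 := by
      have hle : dist y m ≤ dist y z := by
        linarith [mem_seg.1 hm, dist_nonneg (x := m) (y := z)]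
      rw [eq_div_of_mul_eq hyz.ne' hl.symm]
      exact ⟨by positivity, (div_le_one hyz).2 hle⟩
    rw [← h0, ← h1] at hm
    have hmγ := hX.eq_geodesic_of_mem_seg hγ hm
    rw [h0, hl] at hmγ
    simpa only [h0, h1, ← hmγ] using hX.dist_sq_geodesic_le x hγ hl01

lemma dist_le_mul_dist (hX : IsCAT0 X) {z a c a' c' : X} {l : ℝ} (hl : 0 ≤ l)
    (ha' : a' ∈ seg z a) (hc' : c' ∈ seg z c)
    (hza : dist z a' = l * dist z a) (hzc : dist z c' = l * dist z c) :
    dist a' c' ≤ l * dist a c := by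
  have hc'_le := hX.dist_sq_le a' hc' hzc
  have ha'_le := mul_le_mul_of_nonneg_left (hX.dist_sq_le c ha' hza) hl
  rw [dist_comm a' z, hza] at hc'_le
  rw [dist_comm c a', dist_comm c z, dist_comm c a] at ha'_le
  refine le_of_sq_le_sq ?_ (by positivity)
  linarith

lemma infDist_seg_le_of_mem_seg (hX : IsCAT0 X) {p x y w : X} (hw : w ∈ seg p y) :
    infDist w (seg x y) ≤ infDist p (seg x y) := by
  refine (le_infDist (seg_nonempty x y)).2 fun q hq ↦ ?_
  rw [seg_comm] at hw hq
  have hwy : dist y w ≤ dist y p := by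
    linarith [mem_seg.1 hw, dist_nonneg (x := w) (y := p)]
  rcases (dist_nonneg (x := y) (y := p)).eq_or_lt with hyp | hyp
  · have hwy0 : dist y w = 0 := le_antisymm (hyp ▸ hwy) dist_nonneg
    rw [← dist_eq_zero.1 hwy0, dist_eq_zero.1 hyp.symm]
    exact (infDist_zero_of_mem (right_mem_seg x p)).trans_le dist_nonneg
  · set l := dist y w / dist y p
    have hl0 : 0 ≤ l := by positivity
    have hl1 : l ≤ 1 := (div_le_one hyp).2 hwy
    obtain ⟨q', hq', hyq'⟩ := hX.1.exists_mem_seg_dist_eq (x := y) (y := q) (s := l * dist y q)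
      ⟨by positivity, mul_le_of_le_one_left dist_nonneg hl1⟩
    have hq'xy : q' ∈ seg x y := seg_comm y x ▸ seg_subset_seg_left hq hq'
    calc infDist w (seg x y) ≤ dist w q' := infDist_le_dist_of_mem hq'xy
      _ ≤ l * dist p q :=
        hX.dist_le_mul_dist hl0 hw hq' (div_mul_cancel₀ _ hyp.ne').symm hyq'
      _ ≤ dist p q := mul_le_of_le_one_left dist_nonneg hl1

end IsCAT0

end Comparison

section BoundedPaths

variable {X : Type*} [MetricSpace X]

lemma lipschitzOnWith_Icc_of_Icc_of_Icc {f : ℝ → X} {K : NNReal} {a b c : ℝ}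
    (hab : LipschitzOnWith K f (Icc a b)) (hbc : LipschitzOnWith K f (Icc b c)) :
    LipschitzOnWith K f (Icc a c) := by
  refine .of_dist_le_mul fun s hs t ht ↦ ?_
  wlog hst : s ≤ t generalizing s t
  · rw [dist_comm, dist_comm s]
    exact this t ht s hs (le_of_not_ge hst)
  rcases le_total t b with htb | hbt
  · exact hab.dist_le_mul s ⟨hs.1, hst.trans htb⟩ t ⟨ht.1, htb⟩
  rcases le_total b s with hbs | hsb
  · exact hbc.dist_le_mul s ⟨hbs, hs.2⟩ t ⟨hbt, ht.2⟩
  · calc dist (f s) (f t) ≤ dist (f s) (f b) + dist (f b) (f t) := dist_triangle _ _ _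
      _ ≤ K * dist s b + K * dist b t := add_le_add
        (hab.dist_le_mul s ⟨hs.1, hsb⟩ b ⟨hs.1.trans hsb, le_rfl⟩)
        (hbc.dist_le_mul b ⟨le_rfl, hbt.trans ht.2⟩ t ⟨hbt, ht.2⟩)
      _ = K * dist s t := by
        rw [dist_comm s b, dist_comm b t, dist_comm s t, Real.dist_eq, Real.dist_eq, Real.dist_eq,
          abs_of_nonneg (sub_nonneg.2 hsb), abs_of_nonneg (sub_nonneg.2 hbt),
          abs_of_nonneg (sub_nonneg.2 hst)]
        ring

/-- `u` and `v` are joined inside `P` by a path of length at most `L`. The path is encoded as a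
`1`-Lipschitz map on some interval `[0, ℓ]` with `ℓ ≤ L`, so that length bounds add up under
concatenation. -/
def JoinedWithin (P : Set X) (u v : X) (L : ℝ) : Prop :=
  ∃ ℓ ∈ Icc 0 L, ∃ γ : ℝ → X, γ 0 = u ∧ γ ℓ = v ∧
    LipschitzOnWith 1 γ (Icc 0 ℓ) ∧ MapsTo γ (Icc 0 ℓ) P

namespace JoinedWithin

variable {P Q : Set X} {u v w : X} {L M : ℝ}

lemma mono (h : JoinedWithin P u v L) (hPQ : P ⊆ Q) (hLM : L ≤ M) : JoinedWithin Q u v M :=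
  let ⟨ℓ, hℓ, γ, h0, h1, hlip, hmaps⟩ := h
  ⟨ℓ, ⟨hℓ.1, hℓ.2.trans hLM⟩, γ, h0, h1, hlip, hmaps.mono_right hPQ⟩

lemma right_mem (h : JoinedWithin P u v L) : v ∈ P := by
  obtain ⟨ℓ, hℓ, γ, -, rfl, -, hmaps⟩ := h
  exact hmaps (right_mem_Icc.2 hℓ.1)

lemma dist_le (h : JoinedWithin P u v L) : dist u v ≤ L := by
  obtain ⟨ℓ, hℓ, γ, rfl, rfl, hlip, -⟩ := h
  have hle := hlip.dist_le_mul 0 (left_mem_Icc.2 hℓ.1) ℓ (right_mem_Icc.2 hℓ.1)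
  rw [NNReal.coe_one, one_mul, dist_zero_left, Real.norm_of_nonneg hℓ.1] at hle
  exact hle.trans hℓ.2

lemma symm (h : JoinedWithin P u v L) : JoinedWithin P v u L := by
  obtain ⟨ℓ, hℓ, γ, h0, h1, hlip, hmaps⟩ := h
  have hrev : MapsTo (ℓ - ·) (Icc 0 ℓ) (Icc 0 ℓ) := fun s hs ↦
    ⟨sub_nonneg.2 hs.2, sub_le_self _ hs.1⟩
  refine ⟨ℓ, hℓ, fun s ↦ γ (ℓ - s), by simpa using h1, by simpa using h0,
    .of_dist_le_mul fun s hs t ht ↦ ?_, hmaps.comp hrev⟩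
  simpa only [dist_sub_left] using hlip.dist_le_mul _ (hrev hs) _ (hrev ht)

lemma trans (h : JoinedWithin P u v L) (h' : JoinedWithin P v w M) :
    JoinedWithin P u w (L + M) := by
  obtain ⟨ℓ, hℓ, γ, h0, h1, hlip, hmaps⟩ := h
  obtain ⟨ℓ', hℓ', δ, h0', h1', hlip', hmaps'⟩ := h'
  let f : ℝ → X := fun s ↦ if s ≤ ℓ then γ s else δ (s - ℓ)
  have hfγ (s : ℝ) (hs : s ∈ Icc 0 ℓ) : f s = γ s := if_pos hs.2
  have hfδ (s : ℝ) (hs : s ∈ Icc ℓ (ℓ + ℓ')) : f s = δ (s - ℓ) := by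
    rcases hs.1.eq_or_lt with rfl | hlt
    · simp [f, h1, h0']
    · exact if_neg hlt.not_ge
  have hshift : MapsTo (· - ℓ) (Icc ℓ (ℓ + ℓ')) (Icc 0 ℓ') := fun s hs ↦
    ⟨sub_nonneg.2 hs.1, sub_le_iff_le_add'.2 hs.2⟩
  refine ⟨ℓ + ℓ', ⟨add_nonneg hℓ.1 hℓ'.1, add_le_add hℓ.2 hℓ'.2⟩, f, ?_, ?_, ?_, ?_⟩
  · rw [hfγ 0 (left_mem_Icc.2 hℓ.1), h0]
  · rw [hfδ _ (right_mem_Icc.2 (le_add_of_nonneg_right hℓ'.1)), add_sub_cancel_left, h1']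
  · refine lipschitzOnWith_Icc_of_Icc_of_Icc (b := ℓ) (.of_dist_le_mul fun s hs t ht ↦ ?_)
      (.of_dist_le_mul fun s hs t ht ↦ ?_)
    · simpa only [hfγ s hs, hfγ t ht] using hlip.dist_le_mul s hs t ht
    · simpa only [hfδ s hs, hfδ t ht, dist_sub_right] using
        hlip'.dist_le_mul _ (hshift hs) _ (hshift ht)
  · intro s hs
    rcases le_total s ℓ with hsℓ | hℓs
    · rw [hfγ s ⟨hs.1, hsℓ⟩]
      exact hmaps ⟨hs.1, hsℓ⟩
    · rw [hfδ s ⟨hℓs, hs.2⟩]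
      exact hmaps' (hshift ⟨hℓs, hs.2⟩)

lemma exists_path (h : JoinedWithin P u v L) :
    ∃ γ : ℝ → X, ContinuousOn γ (Icc 0 1) ∧ γ 0 = u ∧ γ 1 = v ∧ MapsTo γ (Icc 0 1) P ∧
      eVariationOn γ (Icc 0 1) ≤ ENNReal.ofReal L := by
  obtain ⟨ℓ, hℓ, γ, h0, h1, hlip, hmaps⟩ := h
  have hscale : MapsTo (ℓ * ·) (Icc (0 : ℝ) 1) (Icc 0 ℓ) := fun s hs ↦
    ⟨mul_nonneg hℓ.1 hs.1, mul_le_of_le_one_right hℓ.1 hs.2⟩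
  have hmono : MonotoneOn (ℓ * ·) (Icc (0 : ℝ) 1) :=
    (monotone_mul_left_of_nonneg hℓ.1).monotoneOn _
  have hlength : eVariationOn (ℓ * ·) (Icc (0 : ℝ) 1) = ENNReal.ofReal ℓ := by
    simpa using hmono.eVariationOn_eq (left_mem_Icc.2 zero_le_one) (right_mem_Icc.2 zero_le_one)
  refine ⟨γ ∘ (ℓ * ·), hlip.continuousOn.comp (by fun_prop) hscale, by simpa using h0,
    by simpa using h1, hmaps.comp hscale, ?_⟩
  calc eVariationOn (γ ∘ (ℓ * ·)) (Icc 0 1)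
      ≤ (1 : NNReal) * eVariationOn (ℓ * ·) (Icc (0 : ℝ) 1) := hlip.comp_eVariationOn_le hscale
    _ = ENNReal.ofReal ℓ := by rw [hlength, ENNReal.coe_one, one_mul]
    _ ≤ ENNReal.ofReal L := ENNReal.ofReal_le_ofReal hℓ.2

end JoinedWithin

lemma GeodesicSpace.joinedWithin_of_seg_subset (hX : GeodesicSpace X) {P : Set X} {x y : X}
    (hP : seg x y ⊆ P) : JoinedWithin P x y (dist x y) := by
  obtain ⟨γ, h0, h1, hγ⟩ := hX.exists_isGeodesic x y
  refine ⟨dist x y, right_mem_Icc.2 dist_nonneg, γ, h0, h1, hγ.lipschitzOnWith, fun s hs ↦ hP ?_⟩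
  simpa only [h0, h1] using hγ.mem_seg hs

end BoundedPaths

section Detour

variable {X : Type*} [MetricSpace X]

-- If `e` is far from `q`, cross from the point of `[q, e]` at distance `3 * D` from `q` to the
-- point of `[p, e]` in the same proportion: Thales bounds the crossing by `d(p, q)`.
lemma IsCAT0.exists_mem_seg_joinedWithin_compl_ball (hX : IsCAT0 X) {p q e : X} {D : ℝ}
    (hpq : dist p q = D) (hfar : seg q e ⊆ (ball p D)ᶜ) :
    ∃ e' ∈ seg p e, JoinedWithin (ball p D)ᶜ q e' (4 * D) := by
  have hD : 0 ≤ D := hpq ▸ dist_nonneg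
  rcases le_or_gt (dist q e) (3 * D) with hqe | hqe
  · exact ⟨e, right_mem_seg p e,
      (hX.1.joinedWithin_of_seg_subset hfar).mono Subset.rfl (by linarith)⟩
  have hqe0 : 0 < dist e q := by rw [dist_comm]; linarith
  set l := 1 - 3 * D / dist e q
  have hlq : l * dist e q = dist e q - 3 * D := by
    rw [sub_mul, one_mul, div_mul_cancel₀ _ hqe0.ne']
  have hl0 : 0 ≤ l := sub_nonneg.2 ((div_le_one hqe0).2 (by rw [dist_comm]; exact hqe.le))
  have hl1 : l ≤ 1 := sub_le_self _ (by positivity)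
  have hmem (x : X) : l * dist e x ∈ Icc 0 (dist e x) :=
    ⟨by positivity, mul_le_of_le_one_left dist_nonneg hl1⟩
  obtain ⟨q', hq', heq'⟩ := hX.1.exists_mem_seg_dist_eq (hmem q)
  obtain ⟨e', he', hee'⟩ := hX.1.exists_mem_seg_dist_eq (hmem p)
  have hq'q : dist q q' = 3 * D := by
    rw [dist_comm]
    linarith [mem_seg.1 hq']
  have hcross : dist q' e' ≤ D := by
    have hthales := hX.dist_le_mul_dist hl0 hq' he' heq' hee'
    rw [dist_comm q p, hpq] at hthales
    exact hthales.trans (mul_le_of_le_one_left hD hl1)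
  have hcross_far : seg q' e' ⊆ (ball p D)ᶜ := by
    intro z hz
    rw [mem_compl_iff, mem_ball', not_lt]
    linarith [mem_seg.1 hz, dist_nonneg (x := z) (y := e'), dist_triangle q p q',
      dist_triangle p z q', dist_comm q p, dist_comm z q']
  have hqq' : seg q q' ⊆ seg q e := seg_subset_seg_left (seg_comm e q ▸ hq')
  exact ⟨e', seg_comm e p ▸ he', ((hX.1.joinedWithin_of_seg_subset (hqq'.trans hfar)).trans
    (hX.1.joinedWithin_of_seg_subset hcross_far)).mono Subset.rfl (by linarith)⟩

lemma IsCAT0.exists_joinedWithin_sides (hX : IsCAT0 X) {p x y : X} {D : ℝ}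
    (hD : infDist p (seg x y) = D) :
    ∃ x' ∈ seg p x, ∃ y' ∈ seg p y, dist p x' ≤ 5 * D ∧ D ≤ dist p y' ∧ dist p y' ≤ 5 * D ∧
      JoinedWithin (ball p D)ᶜ x' y' (8 * D) := by
  obtain ⟨q, hq, hpq⟩ := (hX.isCompact_seg x y).exists_infDist_eq_dist (seg_nonempty x y) p
  rw [hD] at hpq
  have hfar : seg x y ⊆ (ball p D)ᶜ := fun z hz ↦ by
    rw [mem_compl_iff, mem_ball', not_lt]
    exact hD ▸ infDist_le_dist_of_mem hz
  have hqx : seg q x ⊆ seg x y := seg_comm x q ▸ seg_subset_seg_left hq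
  obtain ⟨x', hx', hqx'⟩ :=
    hX.exists_mem_seg_joinedWithin_compl_ball hpq.symm (hqx.trans hfar)
  obtain ⟨y', hy', hqy'⟩ :=
    hX.exists_mem_seg_joinedWithin_compl_ball hpq.symm ((seg_subset_seg_right hq).trans hfar)
  refine ⟨x', hx', y', hy', ?_, ?_, ?_, (hqx'.symm.trans hqy').mono Subset.rfl (by linarith)⟩
  · linarith [hqx'.dist_le, dist_triangle p q x']
  · simpa [dist_comm] using hqy'.right_mem
  · linarith [hqy'.dist_le, dist_triangle p q y']

-- The four legs have total length at most `D / 4 + 5 * D + 8 * D + (5 * D - 3 * D / 4)`.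
lemma IsCAT0.joinedWithin_compl_ball (hX : IsCAT0 X) {p x y u m v : X} {D : ℝ}
    (hD : infDist p (seg x y) = D) (hxm : dist x p ≤ dist x m) (hm : m ∈ seg p y)
    (hv : v ∈ seg p y) (hpu : dist p u = D / 4) (hpm : dist p m = D / 2)
    (hpv : dist p v = 3 * D / 4) :
    JoinedWithin (ball m (D / 4))ᶜ u v (70 * (D / 4)) := by
  have hD0 : 0 ≤ D := hD ▸ infDist_nonneg
  obtain ⟨x', hx', y', hy', hpx', hDy', hpy', hcross⟩ := hX.exists_joinedWithin_sides hD
  have hmy' := mem_seg.1 (hX.mem_seg_of_dist_le hm hy' (by linarith))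
  have hvy' := mem_seg.1 (hX.mem_seg_of_dist_le hv hy' (by linarith))
  have start_to_p : JoinedWithin (ball m (D / 4))ᶜ u p (dist u p) := by
    refine hX.1.joinedWithin_of_seg_subset fun z hz ↦ ?_
    rw [mem_compl_iff, mem_ball, not_lt]
    linarith [mem_seg.1 hz, dist_triangle p z m, dist_nonneg (x := u) (y := z), dist_comm z p,
      dist_comm u p]
  have p_to_x' : JoinedWithin (ball m (D / 4))ᶜ p x' (dist p x') := by
    refine hX.1.joinedWithin_of_seg_subset fun z hz ↦ ?_
    rw [mem_compl_iff, mem_ball, not_lt]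
    linarith [half_dist_le_of_mem_seg hxm (seg_subset_seg_left hx' hz)]
  have x'_to_y' : JoinedWithin (ball m (D / 4))ᶜ x' y' (8 * D) :=
    hcross.mono (compl_subset_compl.2 (ball_subset_ball' (by linarith [dist_comm m p]))) le_rfl
  have y'_to_end : JoinedWithin (ball m (D / 4))ᶜ y' v (dist y' v) := by
    refine hX.1.joinedWithin_of_seg_subset fun z hz ↦ ?_
    rw [mem_compl_iff, mem_ball, not_lt]
    linarith [mem_seg.1 hz, dist_triangle y' z m, dist_nonneg (x := z) (y := v), dist_comm v y',
      dist_comm m y']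
  refine (((start_to_p.trans p_to_x').trans x'_to_y').trans y'_to_end).mono Subset.rfl ?_
  linarith [dist_comm u p, dist_comm v y']

lemma IsGeodesicRay.mem_seg {b : ℝ → X} (hb : IsGeodesicRay b) {s t u : ℝ} (hs : 0 ≤ s)
    (hst : s ≤ t) (htu : t ≤ u) : b t ∈ seg (b s) (b u) := by
  have ht : 0 ≤ t := hs.trans hst
  rw [_root_.mem_seg, hb s t hs ht, hb t u ht (ht.trans htu), hb s u hs (ht.trans htu)]
  rw [abs_of_nonpos (by linarith), abs_of_nonpos (by linarith), abs_of_nonpos (by linarith)]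
  ring

lemma IsGeodesicRay.exists_joinedWithin_compl_ball {b : ℝ → X} (hb : IsGeodesicRay b)
    (hX : IsCAT0 X) {x : X} {s t D : ℝ} (hs : 0 ≤ s) (ht : 0 ≤ t)
    (hx : ∀ u, 0 ≤ u → dist x (b t) ≤ dist x (b u)) (hD : infDist (b t) (seg x (b s)) = D) :
    ∃ τ, D / 2 ≤ τ ∧ τ ≤ t + D / 2 ∧
      JoinedWithin (ball (b τ) (D / 4))ᶜ (b (τ - D / 4)) (b (τ + D / 4)) (70 * (D / 4)) := by
  have hD0 : 0 ≤ D := hD ▸ infDist_nonneg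
  have hDs : D ≤ |t - s| := by
    rw [← hb t s ht hs, ← hD]
    exact infDist_le_dist_of_mem (right_mem_seg _ _)
  rcases le_total t s with hts | hst
  · rw [abs_of_nonpos (by linarith)] at hDs
    have hdist (d : ℝ) (hd : 0 ≤ d) : dist (b t) (b (t + d)) = d := by
      rw [hb t _ ht (by linarith), sub_add_cancel_left, abs_neg, abs_of_nonneg hd]
    refine ⟨t + D / 2, by linarith, le_rfl, ?_⟩
    rw [show t + D / 2 - D / 4 = t + D / 4 by ring,
      show t + D / 2 + D / 4 = t + 3 * D / 4 by ring]
    exact hX.joinedWithin_compl_ball hD (hx _ (by linarith))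
      (hb.mem_seg ht (by linarith) (by linarith)) (hb.mem_seg ht (by linarith) (by linarith))
      (hdist _ (by linarith)) (hdist _ (by linarith)) (hdist _ (by linarith))
  · rw [abs_of_nonneg (by linarith)] at hDs
    have hdist (d : ℝ) (hd : 0 ≤ d) (hdt : d ≤ t) : dist (b t) (b (t - d)) = d := by
      rw [hb t _ ht (by linarith), _root_.sub_sub_cancel, abs_of_nonneg hd]
    have hmem (d : ℝ) (hd : 0 ≤ d) (hdD : d ≤ D) : b (t - d) ∈ seg (b t) (b s) := by
      rw [seg_comm]
      exact hb.mem_seg hs (by linarith) (by linarith)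
    refine ⟨t - D / 2, by linarith, by linarith, ?_⟩
    rw [show t - D / 2 - D / 4 = t - 3 * D / 4 by ring,
      show t - D / 2 + D / 4 = t - D / 4 by ring]
    exact (hX.joinedWithin_compl_ball hD (hx _ (by linarith))
      (hmem _ (by linarith) (by linarith)) (hmem _ (by linarith) (by linarith))
      (hdist _ (by linarith) (by linarith)) (hdist _ (by linarith) (by linarith))
      (hdist _ (by linarith) (by linarith))).symm

end Detour

section SublinearFunctions

lemma map_add_le_of_concaveOn_Ici {f : ℝ → ℝ} (hf : ConcaveOn ℝ (Ici 0) f) (hf0 : 0 ≤ f 0)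
    {s t : ℝ} (hs : 0 ≤ s) (ht : 0 ≤ t) : f (s + t) ≤ f s + f t := by
  rcases (add_nonneg hs ht).eq_or_lt with hst | hst
  · obtain rfl : s = 0 := by linarith
    obtain rfl : t = 0 := by linarith
    simpa using hf0
  have chord_le (a c : ℝ) (ha : 0 ≤ a) (hc : 0 ≤ c) (hac : a + c = s + t) :
      a / (s + t) * f (s + t) ≤ f a := by
    have hconc := hf.2 (mem_Ici.2 le_rfl) (mem_Ici.2 hst.le)
      (show 0 ≤ c / (s + t) by positivity) (show 0 ≤ a / (s + t) by positivity)
      (by rw [← add_div, add_comm, hac, div_self hst.ne'])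
    rw [smul_zero, zero_add, smul_eq_mul, smul_eq_mul, smul_eq_mul,
      div_mul_cancel₀ _ hst.ne'] at hconc
    linarith [show 0 ≤ c / (s + t) * f 0 by positivity]
  calc f (s + t) = s / (s + t) * f (s + t) + t / (s + t) * f (s + t) := by field_simp
    _ ≤ f s + f t := add_le_add (chord_le s t hs ht rfl) (chord_le t s ht hs (add_comm t s))

lemma exists_le_const_add_mul {κ : ℝ → ℝ} (hpos : ∀ t, 0 ≤ κ t) (hmono : Monotone κ)
    (hlim : Tendsto (fun t ↦ κ t / t) atTop (nhds 0)) {ε : ℝ} (hε : 0 < ε) :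
    ∃ A ≥ 0, ∀ t, 0 ≤ t → κ t ≤ A + ε * t := by
  obtain ⟨T, hT⟩ :=
    eventually_atTop.1 ((hlim.eventually_lt_const hε).and (eventually_gt_atTop 0))
  refine ⟨κ T, hpos T, fun t ht ↦ ?_⟩
  rcases le_total t T with htT | hTt
  · exact (hmono htT).trans (le_add_of_nonneg_right (by positivity))
  · obtain ⟨hlt, ht0⟩ := hT t hTt
    exact ((div_lt_iff₀ ht0).1 hlt).le.trans (le_add_of_nonneg_left (hpos T))

lemma exists_forall_mul_map_add_le {κ : ℝ → ℝ} (hone : ∀ t, 1 ≤ κ t) (hmono : Monotone κ)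
    (hadd : ∀ s t, 0 ≤ s → 0 ≤ t → κ (s + t) ≤ κ s + κ t)
    (hlim : Tendsto (fun t ↦ κ t / t) atTop (nhds 0)) {R : ℝ} (hR : 0 < R) :
    ∃ c ≥ 0, ∀ t d, 0 ≤ t → 0 ≤ d → c * κ t ≤ d → R * κ (t + d) ≤ d := by
  obtain ⟨A, hA, hκA⟩ := exists_le_const_add_mul (fun t ↦ zero_le_one.trans (hone t)) hmono hlim
    (show 0 < 1 / (2 * R) by positivity)
  refine ⟨2 * R * (1 + A), by positivity, fun t d ht hd hle ↦ ?_⟩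
  calc R * κ (t + d) ≤ R * (κ t + (A + 1 / (2 * R) * d)) := by
        gcongr
        exact (hadd t d ht hd).trans (add_le_add_right (hκA d hd) _)
    _ = R * (κ t + A) + d / 2 := by
        field_simp
        ring
    _ ≤ R * (κ t + A * κ t) + d / 2 := by
        gcongr
        exact le_mul_of_one_le_right hA (hone t)
    _ ≤ d := by linarith

end SublinearFunctions

section Slimness

variable {X : Type*} [MetricSpace X] {κ : ℝ → ℝ} {o : X} {b : ℝ → X} {π : X → X}

lemma divKappa_div_le_of_joinedWithin {t r C : ℝ} (hκ : 0 < κ t) (hr : 0 < r) (ht : r * κ t < t)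
    (h : JoinedWithin (ball (b t) (r * κ t))ᶜ (b (t - r * κ t)) (b (t + r * κ t))
      (C * (r * κ t))) :
    divKappa κ b r / ENNReal.ofReal r ≤ ENNReal.ofReal C := by
  obtain ⟨γ, hcont, h0, h1, hmaps, hlength⟩ := h.exists_path
  have hγ : γ ∈ pathsOutside κ b r t := ⟨hcont, h0, h1, hmaps⟩
  calc divKappa κ b r / ENNReal.ofReal r
      ≤ rhoKappa κ b r t / ENNReal.ofReal (κ t) / ENNReal.ofReal r := by
        gcongr
        exact iInf₂_le_of_le t ht le_rfl
    _ ≤ ENNReal.ofReal (C * (r * κ t)) / ENNReal.ofReal (κ t) / ENNReal.ofReal r := by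
        gcongr
        exact iInf₂_le_of_le γ hγ hlength
    _ = ENNReal.ofReal C := by
        rw [← ENNReal.ofReal_div_of_pos hκ, ← ENNReal.ofReal_div_of_pos hr]
        congr 1
        field_simp

lemma IsProj.exists_eq_ray (hπ : IsProj b π) (x : X) :
    ∃ t, 0 ≤ t ∧ π x = b t ∧ ∀ u, 0 ≤ u → dist x (b t) ≤ dist x (b u) := by
  obtain ⟨⟨t, ht, hbt⟩, hdist⟩ := hπ x
  refine ⟨t, ht, hbt.symm, fun u hu ↦ ?_⟩
  rw [hbt, hdist]
  exact infDist_le_dist_of_mem ⟨u, hu, rfl⟩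

lemma slimCond1_of_lt_divKappa (hX : IsCAT0 X) (hone : ∀ t, 1 ≤ κ t) (hmono : Monotone κ)
    (hadd : ∀ s t, 0 ≤ s → 0 ≤ t → κ (s + t) ≤ κ s + κ t)
    (hlim : Tendsto (fun t ↦ κ t / t) atTop (nhds 0)) (hb : IsGeodesicRay b) (hb0 : b 0 = o)
    (hπ : IsProj b π) (hdiv : ∀ᶠ r in atTop, 70 < divKappa κ b r / ENNReal.ofReal r) :
    SlimCond1 κ o b π := by
  obtain ⟨R, hR⟩ := eventually_atTop.1 (hdiv.and (eventually_gt_atTop 0))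
  have hR0 : 0 < R := (hR R le_rfl).2
  obtain ⟨c, hc, hκc⟩ :=
    exists_forall_mul_map_add_le hone hmono hadd hlim (show 0 < 2 * R by positivity)
  refine ⟨2 * c, by positivity, ?_⟩
  rintro x _ ⟨s, hs, rfl⟩
  obtain ⟨t, ht, hπt, hnear⟩ := hπ.exists_eq_ray x
  have hot : dist o (b t) = t := by
    rw [← hb0, hb 0 t le_rfl ht, zero_sub, abs_neg, abs_of_nonneg ht]
  rw [hπt, hot]
  by_contra! hlt
  set D := infDist (b t) (seg x (b s)) with hD
  have hκt : 0 < κ t := zero_lt_one.trans_le (hone t)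
  have hD0 : 0 < D := lt_of_le_of_lt (by positivity) hlt
  obtain ⟨τ, hDτ, hτ, hjoined⟩ := hb.exists_joinedWithin_compl_ball hX hs ht hnear hD.symm
  have hκτ : 0 < κ τ := zero_lt_one.trans_le (hone τ)
  obtain ⟨r, hr⟩ : ∃ r, r * κ τ = D / 4 := ⟨D / 4 / κ τ, div_mul_cancel₀ _ hκτ.ne'⟩
  have hRr : R ≤ r := by
    refine le_of_mul_le_mul_right ?_ hκτ
    rw [hr]
    have hmul : R * κ τ ≤ R * κ (t + D / 2) := mul_le_mul_of_nonneg_left (hmono hτ) hR0.le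
    linarith [hκc t (D / 2) ht (by positivity) (by linarith)]
  rw [← hr] at hjoined
  have hle := divKappa_div_le_of_joinedWithin hκτ (hR0.trans_le hRr) (by linarith) hjoined
  rw [ENNReal.ofReal_ofNat] at hle
  exact hle.not_gt (hR r hRr).1

lemma SlimCond1.slimCond2 (h : SlimCond1 κ o b π) (hπ : IsProj b π) : SlimCond2 κ o b π :=
  let ⟨c, hc, hslim⟩ := h
  ⟨c, hc, fun x y hy ↦ ⟨π x, ⟨(hπ x).1, left_mem_seg _ _⟩, hslim x y hy⟩⟩

lemma IsGeodesicRay.mem_seg_or_mem_seg (hb : IsGeodesicRay b) {p y z w : X} (hp : p ∈ rayIm b)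
    (hy : y ∈ rayIm b) (hz : z ∈ rayIm b) (hw : w ∈ rayIm b) (hwyz : w ∈ seg y z) :
    w ∈ seg p y ∨ w ∈ seg p z := by
  obtain ⟨t, ht, rfl⟩ := hp
  obtain ⟨s₁, hs₁, rfl⟩ := hy
  obtain ⟨s₂, hs₂, rfl⟩ := hz
  obtain ⟨u, hu, rfl⟩ := hw
  rw [_root_.mem_seg, hb _ _ hs₁ hu, hb _ _ hu hs₂, hb _ _ hs₁ hs₂] at hwyz
  rw [_root_.mem_seg, _root_.mem_seg, hb _ _ ht hu, hb _ _ hu hs₁, hb _ _ hu hs₂, hb _ _ ht hs₁,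
    hb _ _ ht hs₂]
  grind

lemma SlimCond1.slimCond3 (h : SlimCond1 κ o b π) (hX : IsCAT0 X) (hb : IsGeodesicRay b)
    (hπ : IsProj b π) : SlimCond3 κ o b π := by
  obtain ⟨c, hc, hslim⟩ := h
  refine ⟨c, hc, fun x y z hyz w hw ↦ ?_⟩
  have hy : y ∈ rayIm b := hyz (left_mem_seg y z)
  have hz : z ∈ rayIm b := hyz (right_mem_seg y z)
  rcases hb.mem_seg_or_mem_seg (hπ x).1 hy hz (hyz hw) hw with hwy | hwz
  · calc infDist w (seg y x ∪ seg x z) ≤ infDist w (seg y x) :=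
          infDist_le_infDist_of_subset subset_union_left (seg_nonempty y x)
      _ = infDist w (seg x y) := by rw [seg_comm]
      _ ≤ infDist (π x) (seg x y) := hX.infDist_seg_le_of_mem_seg hwy
      _ ≤ c * κ (dist o (π x)) := hslim x y hy
  · calc infDist w (seg y x ∪ seg x z) ≤ infDist w (seg x z) :=
          infDist_le_infDist_of_subset subset_union_right (seg_nonempty x z)
      _ ≤ infDist (π x) (seg x z) := hX.infDist_seg_le_of_mem_seg hwz
      _ ≤ c * κ (dist o (π x)) := hslim x z hz

lemma SlimCond3.slimCond4 (h : SlimCond3 κ o b π) (hmono : Monotone κ) : SlimCond4 κ o b π :=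
  let ⟨c, hc, hslim⟩ := h
  ⟨c, hc, fun x y z hyz _ hz w hw ↦
    (hslim x y z hyz w hw).trans (mul_le_mul_of_nonneg_left (hmono hz) hc)⟩

end Slimness

theorem superlinear_divergence_implies_slim_general
    {X : Type*} [MetricSpace X] (hX : IsCAT0 X)
    (o : X) (κ : ℝ → ℝ) (hone : ∀ t, 1 ≤ κ t) (hmono : Monotone κ)
    (hadd : ∀ s t, 0 ≤ s → 0 ≤ t → κ (s + t) ≤ κ s + κ t)
    (hlim : Tendsto (fun t ↦ κ t / t) atTop (nhds 0))
    (b : ℝ → X) (hb : IsGeodesicRay b) (hb0 : b 0 = o)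
    (π : X → X) (hπ : IsProj b π)
    (hdiv : ∀ᶠ r in atTop, 70 < divKappa κ b r / ENNReal.ofReal r) :
    SlimCond4 κ o b π ∧ SlimCond1 κ o b π ∧ SlimCond2 κ o b π ∧ SlimCond3 κ o b π := by
  have h1 : SlimCond1 κ o b π := slimCond1_of_lt_divKappa hX hone hmono hadd hlim hb hb0 hπ hdiv
  have h3 : SlimCond3 κ o b π := h1.slimCond3 hX hb hπ
  exact ⟨h3.slimCond4 hmono, h1, h1.slimCond2 hπ, h3⟩

/-- Theorem 3.12. If the κ-lower divergence of a geodesic ray `b` in a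
proper CAT(0) space is superlinear, then `b` is `κ`-slim (it satisfies κ-slim condition 4,
and hence all four κ-slim conditions). -/
theorem superlinear_divergence_implies_slim
    {X : Type*} [MetricSpace X] [ProperSpace X] (hX : IsCAT0 X)
    (o : X) (κ : ℝ → ℝ) (hκ : IsSublinearFn κ)
    (b : ℝ → X) (hb : IsGeodesicRay b) (hb0 : b 0 = o)
    (π : X → X) (hπ : IsProj b π)
    (hsup : Tendsto (fun r : ℝ => divKappa κ b r / ENNReal.ofReal r) atTop (nhds ⊤)) :
    SlimCond4 κ o b π ∧ SlimCond1 κ o b π ∧ SlimCond2 κ o b π ∧ SlimCond3 κ o b π := by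
  have hadd (s t : ℝ) (hs : 0 ≤ s) (ht : 0 ≤ t) : κ (s + t) ≤ κ s + κ t :=
    map_add_le_of_concaveOn_Ici hκ.concave (zero_le_one.trans (hκ.one_le 0)) hs ht
  exact superlinear_divergence_implies_slim_general hX o κ hκ.one_le hκ.mono hadd hκ.sublinear b hb
    hb0 π hπ (hsup.eventually_const_lt ENNReal.ofNat_lt_top)
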